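/- There is an absolute constant C > 0 with the following property. Let P and Q be disjoint finite sets of points in the Euclidean plane ℝ² with |P| = |Q| = n, and let j ≥ 1 be an integer. Then the number of pairs (p, q) with p ∈ P and q ∈ Q such that the line through p and q has richness at least 2^(j−1) and at most 2^j with respect to P ∪ Q is at most C · (n²/2^j + n · 2^j). -/

import Mathlib

open Set

noncomputable section

/-- The line through two points of the plane, as a set. -/
def lineThrough (p q : ℝ × ℝ) : Set (ℝ × ℝ) := (affineSpan ℝ {p, q} : AffineSubspace ℝ (ℝ × ℝ))

/-- A subset of the plane is a line if it is the affine span of two distinct points. -/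
def IsLine (L : Set (ℝ × ℝ)) : Prop := ∃ p q : ℝ × ℝ, p ≠ q ∧ L = lineThrough p q

/-- The richness of a line `L` with respect to a finite point set `S`:
the number of points of `S` incident on `L`. -/
def richness (S : Finset (ℝ × ℝ)) (L : Set (ℝ × ℝ)) : ℕ := ((S : Set (ℝ × ℝ)) ∩ L).ncard

/-- The lines induced by a finite point set `S`: lines passing through
at least two distinct points of `S`. -/
def InducedLines (S : Finset (ℝ × ℝ)) : Set (Set (ℝ × ℝ)) :=
  {L | IsLine L ∧ ∃ p ∈ S, ∃ q ∈ S, p ≠ q ∧ p ∈ L ∧ q ∈ L}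

/-- The bichromatic induced lines of a bichromatic point set `(P, Q)`:
lines incident on at least one point of `P` and at least one point of `Q`
(for disjoint `P`, `Q` such a line passes through two distinct points of `P ∪ Q`). -/
def BichromLines (P Q : Finset (ℝ × ℝ)) : Set (Set (ℝ × ℝ)) :=
  {L | IsLine L ∧ (∃ p ∈ P, p ∈ L) ∧ (∃ q ∈ Q, q ∈ L)}

def sl (y : ℝ → ℝ) (e : ℝ × ℝ) : ℝ := (y e.2 - y e.1) / (e.2 - e.1)

def hgt (y : ℝ → ℝ) (e : ℝ × ℝ) (x : ℝ) : ℝ := y e.1 + (x - e.1) * sl y e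

theorem hgt_left (y : ℝ → ℝ) (e : ℝ × ℝ) : hgt y e e.1 = y e.1 := by simp [hgt]

theorem hgt_right (y : ℝ → ℝ) (e : ℝ × ℝ) (h : e.1 < e.2) : hgt y e e.2 = y e.2 := by
  have : e.2 - e.1 ≠ 0 := (sub_pos.2 h).ne'
  unfold hgt sl
  field_simp
  ring

theorem hgt_cont (y : ℝ → ℝ) (e : ℝ × ℝ) : Continuous (hgt y e) := by
  unfold hgt; fun_prop

theorem hgt_sign (y : ℝ → ℝ) (e f : ℝ × ℝ) (z x : ℝ) (hzx : z < x)
    (hne : ∀ t, z < t → t < x → hgt y e t ≠ hgt y f t)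
    (hx : hgt y e x < hgt y f x) : hgt y e z ≤ hgt y f z := by
  by_contra hcon
  push Not at hcon
  have hc : ContinuousOn (fun t => hgt y e t - hgt y f t) (Icc z x) :=
    ((hgt_cont y e).sub (hgt_cont y f)).continuousOn
  have := intermediate_value_Ioo' hzx.le hc
  have h0 : (0 : ℝ) ∈ Ioo (hgt y e x - hgt y f x) (hgt y e z - hgt y f z) :=
    ⟨by linarith, by linarith⟩
  obtain ⟨t, ht, ht0⟩ := this h0
  exact hne t ht.1 ht.2 (by simpa [sub_eq_zero] using ht0)

theorem plane_bound (V : Finset ℝ) (y : ℝ → ℝ) (E : Finset (ℝ × ℝ))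
    (hE : ∀ e ∈ E, e.1 ∈ V ∧ e.2 ∈ V ∧ e.1 < e.2)
    (hv : ∀ e ∈ E, ∀ v ∈ V, e.1 < v → v < e.2 → hgt y e v ≠ y v)
    (hc : ∀ e ∈ E, ∀ f ∈ E, e ≠ f → ∀ x, e.1 < x → x < e.2 → f.1 < x → x < f.2 →
      hgt y e x ≠ hgt y f x) : E.card ≤ 3 * V.card := by
  classical
  set E1 := E.filter (fun e => ∀ f ∈ E, f.1 = e.1 → sl y f ≤ sl y e) with hE1
  set E2 := E.filter (fun e => ∃ w ∈ V, (e.1 < w ∧ w < e.2) ∧ hgt y e w < y w ∧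
    ∀ f ∈ E, f.1 < w → w < f.2 → hgt y f w < y w → hgt y f w ≤ hgt y e w) with hE2
  set E3 := E.filter (fun e => ∃ f ∈ E, f.1 = e.1 ∧ e.2 < f.2 ∧ y e.2 < hgt y f e.2 ∧
    ∀ g ∈ E, g.1 < e.2 → e.2 < g.2 → y e.2 < hgt y g e.2 → hgt y f e.2 ≤ hgt y g e.2) with hE3
  have c1 : E1.card ≤ V.card := by
    apply Finset.card_le_card_of_injOn Prod.fst
    · intro e he
      have he := (Finset.mem_filter.1 he).1
      exact (hE e he).1
    · intro e he f hf hef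
      obtain ⟨he, he'⟩ := Finset.mem_filter.1 he
      obtain ⟨hf, hf'⟩ := Finset.mem_filter.1 hf
      have hs : sl y e = sl y f := le_antisymm (hf' e he hef) (he' f hf hef.symm)
      by_contra hne
      obtain ⟨x, hx1, hx2⟩ := exists_between (lt_min (hE e he).2.2 (hef ▸ (hE f hf).2.2))
      have h1 := lt_of_lt_of_le hx2 (min_le_left _ _)
      have h2 := lt_of_lt_of_le hx2 (min_le_right _ _)
      refine hc e he f hf hne x hx1 h1 (hef ▸ hx1) h2 ?_
      simp only [hgt, hs]; rw [hef]
  have c2 : E2.card ≤ V.card := by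
    apply Finset.card_le_card_of_forall_subsingleton (fun e w => (e.1 < w ∧ w < e.2) ∧
      hgt y e w < y w ∧
      ∀ f ∈ E, f.1 < w → w < f.2 → hgt y f w < y w → hgt y f w ≤ hgt y e w)
    · intro e he
      exact (Finset.mem_filter.1 he).2
    · rintro w hw e ⟨he, ⟨h1, h2⟩, h3, h4⟩ f ⟨hf, ⟨k1, k2⟩, k3, k4⟩
      have he := (Finset.mem_filter.1 he).1
      have hf := (Finset.mem_filter.1 hf).1
      by_contra hne
      exact hc e he f hf hne w h1 h2 k1 k2 (le_antisymm (k4 e he h1 h2 h3) (h4 f hf k1 k2 k3))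
  have c3 : E3.card ≤ V.card := by
    apply Finset.card_le_card_of_injOn Prod.snd
    · intro e he
      have he := (Finset.mem_filter.1 he).1
      exact (hE e he).2.1
    · intro e he f hf hef
      obtain ⟨he, e', he', h1, h2, h3, h4⟩ := Finset.mem_filter.1 he
      obtain ⟨hf, f', hf', k1, k2, k3, k4⟩ := Finset.mem_filter.1 hf
      have hee := (hE e he).2.2
      have hff := (hE f hf).2.2
      rw [← hef] at k2 k3 k4 hff
      have : e' = f' := by
        by_contra hne
        have h1' : e'.1 < e.2 := by rw [h1]; exact hee
        have k1' : f'.1 < e.2 := by rw [k1]; exact hff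
        exact hc e' he' f' hf' hne e.2 h1' h2 k1' k2
          (le_antisymm (h4 f' hf' k1' k2 k3) (k4 e' he' h1' h2 h3))
      subst this
      exact Prod.ext (h1.symm.trans k1) hef
  have hsub : E ⊆ E1 ∪ (E2 ∪ E3) := by
    intro e he
    by_cases ht : ∀ f ∈ E, f.1 = e.1 → sl y f ≤ sl y e
    · exact Finset.mem_union_left _ (Finset.mem_filter.2 ⟨he, ht⟩)
    apply Finset.mem_union_right
    push Not at ht
    obtain ⟨f0, hf0, hf0e, hf0s⟩ := ht
    obtain ⟨f, hfm, hfmin⟩ := Finset.exists_min_image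
      (E.filter (fun f => f.1 = e.1 ∧ sl y e < sl y f)) (sl y)
      ⟨f0, Finset.mem_filter.2 ⟨hf0, hf0e, hf0s⟩⟩
    obtain ⟨hf, hfe, hfs⟩ := Finset.mem_filter.1 hfm
    obtain ⟨heu, hev, helt⟩ := hE e he
    obtain ⟨hfu, hfv, hflt⟩ := hE f hf
    have hef : e ≠ f := by rintro rfl; exact lt_irrefl _ hfs
    have hcmp : ∀ x, e.1 < x → hgt y e x < hgt y f x := by
      intro x hx
      have := mul_lt_mul_of_pos_left hfs (sub_pos.2 hx)
      simp only [hgt, hfe]; linarith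
    set W := V.filter (fun w => e.1 < w ∧ w ≤ e.2 ∧ w ≤ f.2 ∧ hgt y e w ≤ y w ∧ y w ≤ hgt y f w)
      with hW
    have hWne : W.Nonempty := by
      rcases le_total e.2 f.2 with h | h
      · refine ⟨e.2, Finset.mem_filter.2 ⟨hev, helt, le_rfl, h, (hgt_right y e helt).le, ?_⟩⟩
        rw [← hgt_right y e helt]; exact (hcmp _ helt).le
      · refine ⟨f.2, Finset.mem_filter.2 ⟨hfv, hfe ▸ hflt, h, le_rfl, ?_, (hgt_right y f hflt).ge⟩⟩
        rw [← hgt_right y f hflt]; exact (hcmp _ (hfe ▸ hflt)).le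
    obtain ⟨w, hwW, hwmin⟩ := Finset.exists_min_image W id hWne
    obtain ⟨hwV, hw1, hw2, hw3, hw4, hw5⟩ := Finset.mem_filter.1 hwW
    have key : ∀ g ∈ E, g.1 < w → w < g.2 → hgt y e w < hgt y g w → hgt y g w < hgt y f w →
        False := by
      intro g hg hgw hwg h1 h2
      have hge : e ≠ g := by rintro rfl; exact lt_irrefl _ h1
      have hgf : g ≠ f := by rintro rfl; exact lt_irrefl _ h2
      have s1 : ∀ z, e.1 ≤ z → g.1 ≤ z → z < w → hgt y e z ≤ hgt y g z := by
        intro z hz1 hz2 hz3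
        exact hgt_sign y e g z w hz3 (fun t ht1 ht2 => hc e he g hg hge t (by linarith)
          (by linarith) (by linarith) (by linarith)) h1
      have s2 : ∀ z, e.1 ≤ z → g.1 ≤ z → z < w → hgt y g z ≤ hgt y f z := by
        intro z hz1 hz2 hz3
        exact hgt_sign y g f z w hz3 (fun t ht1 ht2 => hc g hg f hf hgf t (by linarith)
          (by linarith) (by linarith) (by linarith)) h2
      rcases lt_trichotomy g.1 e.1 with h | h | h
      · have a1 := s1 e.1 le_rfl h.le hw1
        have a2 := s2 e.1 le_rfl h.le hw1
        rw [hgt_left] at a1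
        have a3 := hgt_left y f
        rw [hfe] at a3
        rw [a3] at a2
        exact hv g hg e.1 heu h (by linarith) (le_antisymm a2 a1)
      · have hp : 0 < w - e.1 := sub_pos.2 hw1
        simp only [hgt, h, hfe] at h1 h2
        have b1 : sl y e < sl y g := lt_of_mul_lt_mul_left (by linarith) hp.le
        have b2 : sl y g < sl y f := lt_of_mul_lt_mul_left (by linarith) hp.le
        exact absurd (hfmin g (Finset.mem_filter.2 ⟨hg, h, b1⟩)) (not_le.2 b2)
      · have a1 := s1 g.1 h.le le_rfl hgw
        have a2 := s2 g.1 h.le le_rfl hgw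
        rw [hgt_left] at a1 a2
        have := hwmin g.1 (Finset.mem_filter.2 ⟨(hE g hg).1, h, by linarith, by linarith, a1, a2⟩)
        simp only [id] at this
        linarith
    by_cases hwe : w = e.2
    · apply Finset.mem_union_right
      subst hwe
      have hne : e.2 ≠ f.2 := fun h => hef (Prod.ext hfe.symm h)
      have hlt := lt_of_le_of_ne hw3 hne
      have hr := hgt_right y e helt
      refine Finset.mem_filter.2 ⟨he, f, hf, hfe, hlt, ?_, ?_⟩
      · rw [← hr]; exact hcmp _ helt
      · intro g hg g1 g2 g3
        by_contra hcon
        exact key g hg g1 g2 (by rw [hr]; exact g3) (not_le.1 hcon)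
    · apply Finset.mem_union_left
      have hlt := lt_of_le_of_ne hw2 hwe
      refine Finset.mem_filter.2 ⟨he, w, hwV, ⟨hw1, hlt⟩,
        lt_of_le_of_ne hw4 (hv e he w hwV hw1 hlt), ?_⟩
      intro g hg g1 g2 g3
      by_contra hcon
      exact key g hg g1 g2 (not_le.1 hcon) (by linarith)
  have := Finset.card_le_card hsub
  have h1 := Finset.card_union_le E1 (E2 ∪ E3)
  have h2 := Finset.card_union_le E2 E3
  omega

def Crs (y : ℝ → ℝ) (e f : ℝ × ℝ) : Prop :=
  e ≠ f ∧ ∃ x, e.1 < x ∧ x < e.2 ∧ f.1 < x ∧ x < f.2 ∧ hgt y e x = hgt y f x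

open Classical in
theorem cross_weak (V : Finset ℝ) (y : ℝ → ℝ) (E : Finset (ℝ × ℝ))
    (hE : ∀ e ∈ E, e.1 ∈ V ∧ e.2 ∈ V ∧ e.1 < e.2)
    (hv : ∀ e ∈ E, ∀ v ∈ V, e.1 < v → v < e.2 → hgt y e v ≠ y v) :
    E.card ≤ 3 * V.card + ((E ×ˢ E).filter (fun ef => Crs y ef.1 ef.2)).card := by
  set X := (E ×ˢ E).filter (fun ef => Crs y ef.1 ef.2) with hX
  have hsub : E ⊆ (E \ X.image Prod.fst) ∪ X.image Prod.fst := by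
    intro e he; simp only [Finset.mem_union, Finset.mem_sdiff]; tauto
  have h1 := (Finset.card_le_card hsub).trans (Finset.card_union_le _ _)
  have h2 : (X.image Prod.fst).card ≤ X.card := Finset.card_image_le
  have h3 : (E \ X.image Prod.fst).card ≤ 3 * V.card := by
    apply plane_bound V y
    · intro e he; exact hE e (Finset.mem_sdiff.1 he).1
    · intro e he; exact hv e (Finset.mem_sdiff.1 he).1
    · intro e he f hf hne x h1 h2 h3 h4 h5
      obtain ⟨he, he'⟩ := Finset.mem_sdiff.1 he
      obtain ⟨hf, hf'⟩ := Finset.mem_sdiff.1 hf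
      apply he'
      exact Finset.mem_image.2 ⟨(e, f), Finset.mem_filter.2
        ⟨Finset.mem_product.2 ⟨he, hf⟩, hne, x, h1, h2, h3, h4, h5⟩, rfl⟩
  omega

open Classical in
def smp (V : Finset ℝ) (q : ℕ) (f : V → Fin (q + 1)) : Finset ℝ :=
  V.filter (fun v => ∃ h : v ∈ V, f ⟨v, h⟩ = 0)

open Classical in
theorem smp_count (V : Finset ℝ) (q : ℕ) (T : Finset ℝ) (hT : T ⊆ V) :
    (Finset.univ.filter (fun f : V → Fin (q + 1) => T ⊆ smp V q f)).card * (q + 1) ^ T.card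
      = (q + 1) ^ V.card := by
  have h1 : (Finset.univ.filter (fun f : V → Fin (q + 1) => T ⊆ smp V q f)) =
      Fintype.piFinset (fun v : V => if v.1 ∈ T then ({0} : Finset (Fin (q + 1)))
        else Finset.univ) := by
    ext f
    simp only [Finset.mem_filter, Finset.mem_univ, true_and, Fintype.mem_piFinset]
    constructor
    · intro h v
      split_ifs with hv
      · have := h hv
        simp only [smp, Finset.mem_filter] at this
        obtain ⟨_, _, h3⟩ := this
        simpa using h3
      · simp
    · intro h v hv
      have := h ⟨v, hT hv⟩
      simp only [hv, if_true, Finset.mem_singleton] at this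
      exact Finset.mem_filter.2 ⟨hT hv, hT hv, this⟩
  rw [h1, Fintype.card_piFinset]
  have h2 : (∏ v : V, (if v.1 ∈ T then ({0} : Finset (Fin (q + 1)))
        else Finset.univ).card) = ∏ v ∈ V, (if v ∈ T then 1 else (q + 1)) := by
    rw [← Finset.prod_coe_sort V]
    apply Finset.prod_congr rfl
    intro v _
    split_ifs <;> simp
  have h3 : (q + 1) ^ T.card = ∏ v ∈ V, (if v ∈ T then (q + 1) else 1) := by
    rw [Finset.prod_ite_mem, Finset.inter_eq_right.2 hT]; simp
  rw [h2, h3, ← Finset.prod_mul_distrib, ← Finset.prod_const]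
  apply Finset.prod_congr rfl
  intro v _
  split_ifs <;> simp

open Classical in
theorem smp_sum {α : Type*} (V : Finset ℝ) (q : ℕ) (A : Finset α) (T : α → Finset ℝ) (k : ℕ)
    (hT : ∀ a ∈ A, T a ⊆ V) (hk : ∀ a ∈ A, (T a).card = k) :
    (∑ f : V → Fin (q + 1), (A.filter (fun a => T a ⊆ smp V q f)).card) * (q + 1) ^ k
      = A.card * (q + 1) ^ V.card := by
  simp only [Finset.card_filter]
  rw [Finset.sum_comm, Finset.sum_mul, Finset.card_eq_sum_ones, Finset.sum_mul]
  apply Finset.sum_congr rfl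
  intro a ha
  rw [← Finset.card_filter, one_mul, ← hk a ha]
  convert smp_count V q (T a) (hT a ha)

open Classical in
theorem cross_strong (V : Finset ℝ) (y : ℝ → ℝ) (E : Finset (ℝ × ℝ))
    (hE : ∀ e ∈ E, e.1 ∈ V ∧ e.2 ∈ V ∧ e.1 < e.2)
    (hv : ∀ e ∈ E, ∀ v ∈ V, e.1 < v → v < e.2 → hgt y e v ≠ y v)
    (hd : ∀ e ∈ E, ∀ f ∈ E, Crs y e f → e.1 ≠ f.1 ∧ e.1 ≠ f.2 ∧ e.2 ≠ f.1 ∧ e.2 ≠ f.2)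
    (q : ℕ) :
    E.card * (q + 1) ^ 2 ≤ 3 * V.card * (q + 1) ^ 3 +
      ((E ×ˢ E).filter (fun ef => Crs y ef.1 ef.2)).card := by
  set X := (E ×ˢ E).filter (fun ef => Crs y ef.1 ef.2) with hX
  have sE := smp_sum V q E (fun e => {e.1, e.2}) 2
    (by intro e he; have := hE e he
        intro x hx; simp only [Finset.mem_insert, Finset.mem_singleton] at hx
        rcases hx with rfl | rfl; exacts [this.1, this.2.1])
    (by intro e he; exact Finset.card_pair (hE e he).2.2.ne)
  have sV := smp_sum V q V (fun e => {e}) 1 (by simp) (by simp)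
  have sX := smp_sum V q X (fun ef => {ef.1.1, ef.1.2, ef.2.1, ef.2.2}) 4
    (by rintro ⟨e, f⟩ he
        obtain ⟨h1, h2⟩ := Finset.mem_filter.1 he
        obtain ⟨h1, h3⟩ := Finset.mem_product.1 h1
        have := hE e h1; have := hE f h3
        intro x hx; simp only [Finset.mem_insert, Finset.mem_singleton] at hx
        rcases hx with rfl | rfl | rfl | rfl <;> tauto)
    (by rintro ⟨e, f⟩ he
        obtain ⟨h1, h2⟩ := Finset.mem_filter.1 he
        obtain ⟨h1, h3⟩ := Finset.mem_product.1 h1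
        have a1 := (hE e h1).2.2.ne; have a2 := (hE f h3).2.2.ne
        obtain ⟨d1, d2, d3, d4⟩ := hd e h1 f h3 h2
        simp only at *
        rw [Finset.card_insert_of_notMem, Finset.card_insert_of_notMem, Finset.card_pair a2]
        · simp [d3, d4]
        · simp [a1, d1, d2])
  have hle : ∑ f : V → Fin (q + 1),
        (E.filter (fun e => ({e.1, e.2} : Finset ℝ) ⊆ smp V q f)).card ≤
      ∑ f : V → Fin (q + 1), (3 * (V.filter (fun v => ({v} : Finset ℝ) ⊆ smp V q f)).card +
        (X.filter (fun ef => ({ef.1.1, ef.1.2, ef.2.1, ef.2.2} : Finset ℝ) ⊆ smp V q f)).card) := by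
    apply Finset.sum_le_sum
    intro f _
    set S := smp V q f
    have hSV : S ⊆ V := Finset.filter_subset _ _
    have hVS : V.filter (fun v => ({v} : Finset ℝ) ⊆ S) = S := by
      ext v; simp only [Finset.mem_filter, Finset.singleton_subset_iff]
      exact ⟨fun h => h.2, fun h => ⟨hSV h, h⟩⟩
    rw [hVS]
    refine (cross_weak S y (E.filter (fun e => ({e.1, e.2} : Finset ℝ) ⊆ S)) ?_ ?_).trans ?_
    · intro e he
      obtain ⟨h1, h2⟩ := Finset.mem_filter.1 he
      exact ⟨h2 (by simp), h2 (by simp), (hE e h1).2.2⟩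
    · intro e he v hvS
      exact hv e (Finset.mem_filter.1 he).1 v (hSV hvS)
    · apply Nat.add_le_add_left
      apply Finset.card_le_card
      rintro ⟨e, f⟩ h
      simp only [Finset.mem_filter, Finset.mem_product, hX] at h ⊢
      obtain ⟨⟨⟨h1, h2⟩, h3, h4⟩, h5⟩ := h
      refine ⟨⟨⟨h1, h3⟩, h5⟩, ?_⟩
      intro x hx; simp only [Finset.mem_insert, Finset.mem_singleton] at hx
      rcases hx with rfl | rfl | rfl | rfl
      exacts [h2 (by simp), h2 (by simp), h4 (by simp), h4 (by simp)]
  rw [Finset.sum_add_distrib, ← Finset.mul_sum] at hle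
  set a := ∑ f : V → Fin (q + 1),
        (E.filter (fun e => ({e.1, e.2} : Finset ℝ) ⊆ smp V q f)).card
  set b := ∑ f : V → Fin (q + 1), (V.filter (fun v => ({v} : Finset ℝ) ⊆ smp V q f)).card
  set c := ∑ f : V → Fin (q + 1),
    (X.filter (fun ef => ({ef.1.1, ef.1.2, ef.2.1, ef.2.2} : Finset ℝ) ⊆ smp V q f)).card
  have hpos : 0 < (q + 1) ^ V.card := by positivity
  refine Nat.le_of_mul_le_mul_right ?_ hpos
  calc E.card * (q + 1) ^ 2 * (q + 1) ^ V.card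
      = (E.card * (q + 1) ^ V.card) * (q + 1) ^ 2 := by ring
    _ = a * (q + 1) ^ 4 := by rw [← sE]; ring
    _ ≤ (3 * b + c) * (q + 1) ^ 4 := Nat.mul_le_mul_right _ hle
    _ = 3 * (b * (q + 1) ^ 1) * (q + 1) ^ 3 + c * (q + 1) ^ 4 := by ring
    _ = _ := by rw [sV, sX]; ring

def pts (V : Finset ℝ) (y : ℝ → ℝ) (l : ℝ × ℝ) : Finset ℝ :=
  V.filter (fun v => y v = l.1 * v + l.2)

theorem mem_pts {V : Finset ℝ} {y : ℝ → ℝ} {l : ℝ × ℝ} {v : ℝ} :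
    v ∈ pts V y l ↔ v ∈ V ∧ y v = l.1 * v + l.2 := Finset.mem_filter

theorem line_unique {l m : ℝ × ℝ} {x z : ℝ} (hxz : x ≠ z)
    (hx : l.1 * x + l.2 = m.1 * x + m.2) (hz : l.1 * z + l.2 = m.1 * z + m.2) : l = m := by
  have h : (l.1 - m.1) * (x - z) = 0 := by linear_combination hx - hz
  have h1 : l.1 = m.1 := by
    rcases mul_eq_zero.1 h with h | h
    · linarith
    · exact absurd (sub_eq_zero.1 h) hxz
  refine Prod.ext h1 ?_
  rw [h1] at hx; linarith

def Cons (V : Finset ℝ) (y : ℝ → ℝ) (l e : ℝ × ℝ) : Prop :=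
  e.1 ∈ pts V y l ∧ e.2 ∈ pts V y l ∧ e.1 < e.2 ∧ ∀ c ∈ pts V y l, e.1 < c → e.2 ≤ c

theorem Cons.hgt {V : Finset ℝ} {y : ℝ → ℝ} {l e : ℝ × ℝ} (h : Cons V y l e) (x : ℝ) :
    hgt y e x = l.1 * x + l.2 := by
  obtain ⟨h1, h2, h3, -⟩ := h
  have : e.2 - e.1 ≠ 0 := (sub_pos.2 h3).ne'
  unfold _root_.hgt sl
  rw [(mem_pts.1 h1).2, (mem_pts.1 h2).2]
  field_simp
  ring

theorem Cons.unique {V : Finset ℝ} {y : ℝ → ℝ} {l e f : ℝ × ℝ} (h : Cons V y l e)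
    (h' : Cons V y l f) {x : ℝ} (h1 : e.1 < x) (h2 : x < e.2) (h3 : f.1 < x) (h4 : x < f.2) :
    e = f := by
  obtain ⟨a1, a2, a3, a4⟩ := h
  obtain ⟨b1, b2, b3, b4⟩ := h'
  have k1 : e.1 = f.1 := by
    rcases lt_trichotomy e.1 f.1 with h | h | h
    · linarith [a4 _ b1 h]
    · exact h
    · linarith [b4 _ a1 h]
  refine Prod.ext k1 (le_antisymm (a4 _ b2 (by linarith)) (b4 _ a2 (by linarith)))

open Classical in
theorem st_nat (V : Finset ℝ) (y : ℝ → ℝ) (L : Finset (ℝ × ℝ)) (k : ℕ)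
    (hL : ∀ l ∈ L, k ≤ (pts V y l).card) (q : ℕ) :
    (L.card * (k - 1)) * (q + 1) ^ 2 ≤ 3 * V.card * (q + 1) ^ 3 + L.card ^ 2 := by
  set E := (V ×ˢ V).filter (fun e => ∃ l ∈ L, Cons V y l e) with hEdef
  have hEc : ∀ e, e ∈ E → ∃ l ∈ L, Cons V y l e := fun e he => (Finset.mem_filter.1 he).2
  choose! lam hlam using hEc
  have hEm : ∀ l ∈ L, ∀ e, Cons V y l e → e ∈ E := fun l hl e he =>
    Finset.mem_filter.2 ⟨Finset.mem_product.2 ⟨(mem_pts.1 he.1).1, (mem_pts.1 he.2.1).1⟩, l, hl, he⟩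
  have hcard : L.card * (k - 1) ≤ E.card * 1 := by
    apply Finset.card_mul_le_card_mul (fun l e => Cons V y l e)
    · intro l hl
      have hsz := hL l hl
      rcases (pts V y l).eq_empty_or_nonempty with h0 | hne
      · rw [h0] at hsz; simp at hsz; simp [hsz]
      have hsub : pts V y l ⊆ insert ((pts V y l).max' hne)
          ((E.bipartiteAbove (fun l e => Cons V y l e) l).image Prod.fst) := by
        intro a ha
        rw [Finset.mem_insert]
        by_cases ham : a = (pts V y l).max' hne
        · exact Or.inl ham
        right
        have hlt : a < (pts V y l).max' hne := lt_of_le_of_ne (Finset.le_max' _ _ ha) ham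
        obtain ⟨b, hb, hbmin⟩ := Finset.exists_min_image ((pts V y l).filter (fun b => a < b)) id
          ⟨_, Finset.mem_filter.2 ⟨Finset.max'_mem _ hne, hlt⟩⟩
        obtain ⟨hb1, hb2⟩ := Finset.mem_filter.1 hb
        have hC : Cons V y l (a, b) :=
          ⟨ha, hb1, hb2, fun c hc hac => hbmin c (Finset.mem_filter.2 ⟨hc, hac⟩)⟩
        exact Finset.mem_image.2 ⟨(a, b), by
          rw [Finset.mem_bipartiteAbove]; exact ⟨hEm l hl _ hC, hC⟩, rfl⟩
      have h1 := (Finset.card_le_card hsub).trans (Finset.card_insert_le _ _)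
      have h2 : ((E.bipartiteAbove (fun l e => Cons V y l e) l).image Prod.fst).card ≤ _ :=
        Finset.card_image_le
      omega
    · intro e he
      rw [Finset.card_le_one]
      intro l hl m hm
      rw [Finset.mem_bipartiteBelow] at hl hm
      have h1 := hl.2; have h2 := hm.2
      exact line_unique h1.2.2.1.ne ((h1.hgt _).symm.trans (h2.hgt _))
        ((h1.hgt _).symm.trans (h2.hgt _))
  have hlne : ∀ e ∈ E, ∀ f ∈ E, Crs y e f → lam e ≠ lam f := by
    rintro e he f hf ⟨hne, x, h1, h2, h3, h4, -⟩ hl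
    exact hne ((hlam e he).2.unique (hl ▸ (hlam f hf).2) h1 h2 h3 h4)
  have hX : ((E ×ˢ E).filter (fun ef => Crs y ef.1 ef.2)).card ≤ L.card ^ 2 := by
    rw [sq, ← Finset.card_product]
    apply Finset.card_le_card_of_injOn (fun ef => (lam ef.1, lam ef.2))
    · rintro ⟨e, f⟩ h
      obtain ⟨h, -⟩ := Finset.mem_filter.1 h
      obtain ⟨h1, h2⟩ := Finset.mem_product.1 h
      exact Finset.mem_coe.2 (Finset.mem_product.2 ⟨(hlam _ h1).1, (hlam _ h2).1⟩)
    · rintro ⟨e, f⟩ h ⟨e', f'⟩ h' heq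
      obtain ⟨h, hc⟩ := Finset.mem_filter.1 h
      obtain ⟨he, hf⟩ := Finset.mem_product.1 h
      obtain ⟨h', hc'⟩ := Finset.mem_filter.1 h'
      obtain ⟨he', hf'⟩ := Finset.mem_product.1 h'
      simp only [Prod.mk.injEq] at heq he hf he' hf' hc hc'
      have hlm := hlne e he f hf hc
      obtain ⟨-, x, x1, x2, x3, x4, x5⟩ := hc
      obtain ⟨-, z, z1, z2, z3, z4, z5⟩ := hc'
      have e1 := (hlam e he).2
      have f1 := (hlam f hf).2
      have e2 := (hlam e' he').2
      have f2 := (hlam f' hf').2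
      rw [← heq.1] at e2
      rw [← heq.2] at f2
      rw [e1.hgt, f1.hgt] at x5
      rw [e2.hgt, f2.hgt] at z5
      have hxz : x = z := by
        by_contra hne
        exact hlm (line_unique hne x5 z5)
      subst hxz
      exact Prod.ext (e1.unique e2 x1 x2 z1 z2) (f1.unique f2 x3 x4 z3 z4)
  have hmain := cross_strong V y E ?_ ?_ ?_ q
  · calc _ ≤ (E.card * 1) * (q + 1) ^ 2 := Nat.mul_le_mul_right _ hcard
      _ = E.card * (q + 1) ^ 2 := by ring
      _ ≤ _ := hmain
      _ ≤ _ := Nat.add_le_add_left hX _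
  · intro e he
    obtain ⟨-, h1, h2, h3, -⟩ := hlam e he
    exact ⟨(mem_pts.1 h1).1, (mem_pts.1 h2).1, h3⟩
  · intro e he v hv h1 h2 h3
    have hc := (hlam e he).2
    rw [hc.hgt] at h3
    have := hc.2.2.2 v (mem_pts.2 ⟨hv, h3.symm⟩) h1
    linarith
  · intro e he f hf hc
    have hlm := hlne e he f hf hc
    obtain ⟨-, x, x1, x2, x3, x4, x5⟩ := hc
    have e1 := (hlam e he).2
    have f1 := (hlam f hf).2
    rw [e1.hgt, f1.hgt] at x5
    have key : ∀ z, z ≠ x → z ∈ pts V y (lam e) → z ∈ pts V y (lam f) → False := by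
      intro z hz h1 h2
      exact hlm (line_unique hz ((mem_pts.1 h1).2.symm.trans (mem_pts.1 h2).2) x5)
    refine ⟨fun h => ?_, fun h => ?_, fun h => ?_, fun h => ?_⟩
    · exact key e.1 x1.ne e1.1 (h ▸ f1.1)
    · exact key e.1 x1.ne e1.1 (h ▸ f1.2.1)
    · exact key e.2 x2.ne' e1.2.1 (h ▸ f1.1)
    · exact key e.2 x2.ne' e1.2.1 (h ▸ f1.2.1)

theorem st_real (V : Finset ℝ) (y : ℝ → ℝ) (L : Finset (ℝ × ℝ)) (k : ℕ) (hk : 2 ≤ k)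
    (hL : ∀ l ∈ L, k ≤ (pts V y l).card) :
    (L.card : ℝ) * k ^ 3 ≤ 2304 * (V.card : ℝ) ^ 2 + 12 * V.card * k ^ 2 := by
  set N : ℝ := (V.card : ℝ) with hN
  set M : ℝ := (L.card : ℝ) with hM
  have hN0 : 0 ≤ N := Nat.cast_nonneg _
  have hM0 : 0 ≤ M := Nat.cast_nonneg _
  have hk2 : (2 : ℝ) ≤ k := by exact_mod_cast hk
  by_cases hsmall : M * k ≤ 12 * N
  · have : M * k * k ^ 2 ≤ 12 * N * k ^ 2 := by gcongr
    nlinarith [sq_nonneg N]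
  push Not at hsmall
  have hMpos : 0 < M := by
    rcases hM0.lt_or_eq with h | h
    · exact h
    · rw [← h] at hsmall; linarith
  have hNpos : 0 < N := by
    have : L.Nonempty := by
      rw [← Finset.card_pos]; rw [hM] at hMpos; exact_mod_cast hMpos
    obtain ⟨l, hl⟩ := this
    have h1 := hL l hl
    have h2 : (pts V y l).card ≤ V.card := Finset.card_filter_le _ _
    have : 0 < V.card := by omega
    rw [hN]; exact_mod_cast this
  set r : ℝ := M * k / (12 * N) with hr
  have hr1 : 1 < r := by rw [hr, lt_div_iff₀ (by positivity)]; linarith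
  have hrN : r * (12 * N) = M * k := by rw [hr]; field_simp
  have hfl1 : 1 ≤ ⌊r⌋₊ := Nat.le_floor (by simpa using hr1.le)
  obtain ⟨q, hq⟩ : ∃ q, ⌊r⌋₊ = q + 1 := ⟨⌊r⌋₊ - 1, by omega⟩
  have hst := st_nat V y L k hL q
  rw [← hq] at hst
  set Q : ℝ := (⌊r⌋₊ : ℝ) with hQ
  have hQ1 : 1 ≤ Q := by rw [hQ]; exact_mod_cast hfl1
  have hQr : Q ≤ r := Nat.floor_le (by linarith)
  have hrQ : r < Q + 1 := Nat.lt_floor_add_one r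
  have hst' : (M * (k - 1)) * Q ^ 2 ≤ 3 * N * Q ^ 3 + M ^ 2 := by
    have : ((L.card * (k - 1) * ⌊r⌋₊ ^ 2 : ℕ) : ℝ) ≤
      ((3 * V.card * ⌊r⌋₊ ^ 3 + L.card ^ 2 : ℕ) : ℝ) := by exact_mod_cast hst
    push_cast [Nat.cast_sub (show 1 ≤ k by omega)] at this
    exact this
  have h1 : 3 * N * Q ≤ M * k / 4 := by nlinarith
  have h2 : M * k / 2 ≤ M * (k - 1) := by nlinarith
  have h3 : M * k / 4 * Q ^ 2 ≤ M ^ 2 := by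
    have a1 : 3 * N * Q * Q ^ 2 ≤ M * k / 4 * Q ^ 2 := by gcongr
    have a2 : M * k / 2 * Q ^ 2 ≤ M * (k - 1) * Q ^ 2 := by gcongr
    nlinarith
  have h4 : M * k ≤ 24 * N * Q := by nlinarith
  have h5 : k * Q ^ 2 ≤ 4 * M := by
    have : M * (k * Q ^ 2) ≤ M * (4 * M) := by nlinarith
    exact le_of_mul_le_mul_left this hMpos
  have h6 : (M * k) ^ 2 ≤ (24 * N * Q) ^ 2 := by gcongr
  have h7 : M * (M * k ^ 3) ≤ M * (2304 * N ^ 2) := by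
    calc M * (M * k ^ 3) = (M * k) ^ 2 * k := by ring
      _ ≤ (24 * N * Q) ^ 2 * k := by gcongr
      _ = 576 * N ^ 2 * (k * Q ^ 2) := by ring
      _ ≤ 576 * N ^ 2 * (4 * M) := by gcongr
      _ = _ := by ring
  have h8 := le_of_mul_le_mul_left h7 hMpos
  have : 0 ≤ 12 * N * (k : ℝ) ^ 2 := by positivity
  linarith

theorem exists_shear (S : Finset (ℝ × ℝ)) :
    ∃ t : ℝ, ∀ p ∈ S, ∀ q ∈ S, p.1 + t * p.2 = q.1 + t * q.2 → p = q := by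
  classical
  obtain ⟨t, ht⟩ := Infinite.exists_notMem_finset
    ((S ×ˢ S).image (fun pq => -(pq.1.1 - pq.2.1) / (pq.1.2 - pq.2.2)))
  refine ⟨t, fun p hp q hq h => ?_⟩
  have h2 : p.2 = q.2 := by
    by_contra hne
    apply ht
    refine Finset.mem_image.2 ⟨(p, q), Finset.mem_product.2 ⟨hp, hq⟩, ?_⟩
    have : p.2 - q.2 ≠ 0 := sub_ne_zero.2 hne
    rw [div_eq_iff this]
    simp only
    linarith
  refine Prod.ext ?_ h2
  rw [h2] at h; linarith

def lin (t : ℝ) (p q : ℝ × ℝ) : ℝ × ℝ :=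
  ((q.2 - p.2) / ((q.1 + t * q.2) - (p.1 + t * p.2)),
    p.2 - (q.2 - p.2) / ((q.1 + t * q.2) - (p.1 + t * p.2)) * (p.1 + t * p.2))

theorem mem_lin (t : ℝ) (p q r : ℝ × ℝ) (h : p.1 + t * p.2 ≠ q.1 + t * q.2) :
    r ∈ lineThrough p q ↔ r.2 = (lin t p q).1 * (r.1 + t * r.2) + (lin t p q).2 := by
  have hd : (q.1 + t * q.2) - (p.1 + t * p.2) ≠ 0 := sub_ne_zero.2 h.symm
  unfold lineThrough lin
  rw [SetLike.mem_coe, mem_affineSpan_pair_iff_exists_lineMap_eq]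
  have hm : (q.2 - p.2) / ((q.1 + t * q.2) - (p.1 + t * p.2)) *
      ((q.1 + t * q.2) - (p.1 + t * p.2)) = q.2 - p.2 := div_mul_cancel₀ _ hd
  set m := (q.2 - p.2) / ((q.1 + t * q.2) - (p.1 + t * p.2))
  constructor
  · rintro ⟨s, rfl⟩
    simp only [AffineMap.lineMap_apply, vsub_eq_sub, vadd_eq_add, Prod.fst_add, Prod.snd_add,
      Prod.smul_fst, Prod.smul_snd, Prod.fst_sub, Prod.snd_sub, smul_eq_mul]
    linear_combination (-s) * hm
  · intro hr
    simp only at hr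
    have hr' : (r.2 - p.2) * ((q.1 + t * q.2) - (p.1 + t * p.2)) =
        (q.2 - p.2) * ((r.1 + t * r.2) - (p.1 + t * p.2)) := by
      linear_combination ((q.1 + t * q.2) - (p.1 + t * p.2)) * hr +
        ((r.1 + t * r.2) - (p.1 + t * p.2)) * hm
    refine ⟨((r.1 + t * r.2) - (p.1 + t * p.2)) / ((q.1 + t * q.2) - (p.1 + t * p.2)), ?_⟩
    have e2 : ((r.1 + t * r.2) - (p.1 + t * p.2)) / ((q.1 + t * q.2) - (p.1 + t * p.2))
        * (q.2 - p.2) + p.2 = r.2 := by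
      field_simp
      linarith
    have e1 : ((r.1 + t * r.2) - (p.1 + t * p.2)) / ((q.1 + t * q.2) - (p.1 + t * p.2))
        * ((q.1 + t * q.2) - (p.1 + t * p.2)) = (r.1 + t * r.2) - (p.1 + t * p.2) := by
      field_simp
    set s := ((r.1 + t * r.2) - (p.1 + t * p.2)) / ((q.1 + t * q.2) - (p.1 + t * p.2))
    apply Prod.ext
    · simp only [AffineMap.lineMap_apply, vsub_eq_sub, vadd_eq_add, Prod.fst_add,
        Prod.smul_fst, Prod.fst_sub, smul_eq_mul]
      linear_combination e1 - t * e2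
    · simp only [AffineMap.lineMap_apply, vsub_eq_sub, vadd_eq_add, Prod.snd_add,
        Prod.smul_snd, Prod.snd_sub, smul_eq_mul]
      exact e2

theorem pairs_bound (S : Finset (ℝ × ℝ)) (A : Finset ((ℝ × ℝ) × (ℝ × ℝ))) (k : ℕ) (hk : 2 ≤ k)
    (hA : ∀ a ∈ A, a.1 ∈ S ∧ a.2 ∈ S ∧ a.1 ≠ a.2 ∧ k ≤ richness S (lineThrough a.1 a.2) ∧
      richness S (lineThrough a.1 a.2) ≤ 2 * k) :
    (A.card : ℝ) * k ≤ 9216 * (S.card : ℝ) ^ 2 + 48 * S.card * k ^ 2 := by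
  classical
  obtain ⟨t, ht⟩ := exists_shear S
  set φ : ℝ × ℝ → ℝ := fun p => p.1 + t * p.2 with hφ
  have hinj : Set.InjOn φ S := fun p hp q hq h => ht p hp q hq h
  set y : ℝ → ℝ := fun x => (Function.invFunOn φ S x).2 with hy
  have hyφ : ∀ p ∈ S, y (φ p) = p.2 := by
    intro p hp
    simp only [hy]
    rw [hinj.leftInvOn_invFunOn (Finset.mem_coe.2 hp)]
  set V := S.image φ with hV
  have hVc : V.card = S.card := Finset.card_image_of_injOn hinj
  set L := A.image (fun a => lin t a.1 a.2) with hL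
  set on : ℝ × ℝ → Finset (ℝ × ℝ) := fun l => S.filter (fun r => r.2 = l.1 * φ r + l.2) with hon
  have hne : ∀ a ∈ A, φ a.1 ≠ φ a.2 := fun a ha h =>
    (hA a ha).2.2.1 (hinj (hA a ha).1 (hA a ha).2.1 h)
  have hrich : ∀ a ∈ A, richness S (lineThrough a.1 a.2) = (on (lin t a.1 a.2)).card := by
    intro a ha
    unfold richness
    rw [← Set.ncard_coe_finset]
    congr 1
    ext r
    simp only [hon, Set.mem_inter_iff, Finset.mem_coe, Finset.mem_filter]
    rw [mem_lin t a.1 a.2 r (hne a ha)]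
  have hself : ∀ a ∈ A, a.1 ∈ on (lin t a.1 a.2) ∧ a.2 ∈ on (lin t a.1 a.2) := by
    intro a ha
    refine ⟨Finset.mem_filter.2 ⟨(hA a ha).1, (mem_lin t _ _ _ (hne a ha)).1 ?_⟩,
      Finset.mem_filter.2 ⟨(hA a ha).2.1, (mem_lin t _ _ _ (hne a ha)).1 ?_⟩⟩
    · exact left_mem_affineSpan_pair ℝ _ _
    · exact right_mem_affineSpan_pair ℝ _ _
  have hst := st_real V y L k hk (by
    intro l hl
    obtain ⟨a, ha, rfl⟩ := Finset.mem_image.1 hl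
    have h1 := (hA a ha).2.2.2.1
    rw [hrich a ha] at h1
    refine h1.trans ?_
    apply Finset.card_le_card_of_injOn φ
    · intro r hr
      obtain ⟨hr1, hr2⟩ := Finset.mem_filter.1 hr
      refine Finset.mem_coe.2 (mem_pts.2 ⟨Finset.mem_image_of_mem _ hr1, ?_⟩)
      rw [hyφ r hr1]; exact hr2
    · exact hinj.mono (Finset.coe_subset.2 (Finset.filter_subset _ _)))
  have hfib : A.card ≤ (2 * k) ^ 2 * L.card := by
    apply Finset.card_le_mul_card_image
    intro l hl
    obtain ⟨a, ha, rfl⟩ := Finset.mem_image.1 hl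
    have h1 := (hA a ha).2.2.2.2
    rw [hrich a ha] at h1
    calc _ ≤ (on (lin t a.1 a.2) ×ˢ on (lin t a.1 a.2)).card := by
          apply Finset.card_le_card
          intro b hb
          obtain ⟨hb1, hb2⟩ := Finset.mem_filter.1 hb
          have := hself b hb1
          rw [hb2] at this
          exact Finset.mem_product.2 this
      _ ≤ _ := by
          rw [Finset.card_product, sq]
          exact Nat.mul_le_mul h1 h1
  have hfib' : (A.card : ℝ) ≤ (2 * k) ^ 2 * L.card := by exact_mod_cast hfib
  rw [hVc] at hst
  calc (A.card : ℝ) * k ≤ (2 * k) ^ 2 * L.card * k := by gcongr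
    _ = 4 * (L.card * k ^ 3) := by ring
    _ ≤ 4 * (2304 * (S.card : ℝ) ^ 2 + 12 * S.card * k ^ 2) := by gcongr
    _ = _ := by ring

/-- The number of bichromatic pairs whose line has richness between `2^(j-1)` and `2^j`
is at most `C · (n²/2^j + n · 2^j)`. -/
theorem dyadic_pairs :
    ∃ C : ℝ, 0 < C ∧ ∀ (P Q : Finset (ℝ × ℝ)) (n j : ℕ),
      Disjoint P Q → P.card = n → Q.card = n → 1 ≤ j →
      ((((P ×ˢ Q).filter fun pq =>
          2 ^ (j - 1) ≤ richness (P ∪ Q) (lineThrough pq.1 pq.2) ∧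
          richness (P ∪ Q) (lineThrough pq.1 pq.2) ≤ 2 ^ j).card : ℝ)) ≤
        C * ((n : ℝ) ^ 2 / 2 ^ j + (n : ℝ) * 2 ^ j) := by
  refine ⟨100000, by norm_num, ?_⟩
  intro P Q n j hdisj hP hQ hj
  obtain ⟨i, rfl⟩ : ∃ i, j = i + 1 := ⟨j - 1, by omega⟩
  rw [Nat.add_sub_cancel]
  set A := (P ×ˢ Q).filter fun pq =>
          2 ^ i ≤ richness (P ∪ Q) (lineThrough pq.1 pq.2) ∧
          richness (P ∪ Q) (lineThrough pq.1 pq.2) ≤ 2 ^ (i + 1) with hA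
  have hn0 : (0 : ℝ) ≤ n := Nat.cast_nonneg _
  rcases Nat.eq_zero_or_pos i with rfl | hi
  · have h1 : A.card ≤ n * n := by
      refine (Finset.card_filter_le _ _).trans ?_
      rw [Finset.card_product, hP, hQ]
    have h2 : (A.card : ℝ) ≤ n * n := by exact_mod_cast h1
    norm_num
    nlinarith
  · have hk : 2 ≤ 2 ^ i := by
      calc 2 = 2 ^ 1 := by norm_num
        _ ≤ 2 ^ i := Nat.pow_le_pow_right (by norm_num) hi
    have hb := pairs_bound (P ∪ Q) A (2 ^ i) hk (by
      intro a ha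
      obtain ⟨h1, h2, h3⟩ := Finset.mem_filter.1 ha
      obtain ⟨h4, h5⟩ := Finset.mem_product.1 h1
      refine ⟨Finset.mem_union_left _ h4, Finset.mem_union_right _ h5, ?_, h2, ?_⟩
      · intro h
        rw [h] at h4
        exact Finset.disjoint_left.1 hdisj h4 h5
      · rw [pow_succ] at h3; omega)
    rw [Finset.card_union_of_disjoint hdisj, hP, hQ] at hb
    push_cast at hb
    rw [pow_succ (2 : ℝ) i]
    set K : ℝ := 2 ^ i with hK
    have hK0 : 0 < K := by positivity
    have h1 : (A.card : ℝ) ≤ (9216 * ((n : ℝ) + n) ^ 2 + 48 * (n + n) * K ^ 2) / K := by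
      rw [le_div_iff₀ hK0]; exact hb
    refine h1.trans ?_
    rw [div_le_iff₀ hK0]
    have h2 : 100000 * ((n : ℝ) ^ 2 / (K * 2) + n * (K * 2)) * K
        = 50000 * (n : ℝ) ^ 2 + 200000 * (n * K ^ 2) := by
      field_simp
      ring
    rw [h2]
    have h3 : 0 ≤ (n : ℝ) * K ^ 2 := by positivity
    nlinarith [sq_nonneg (n : ℝ)]
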